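/- Assume K is a nonempty closed convex proper subset of ℝⁿ (there exists y ∈ ℝⁿ with y ∉ K), and assume the probability space admits measurable sets of arbitrarily small positive measure (for every ε > 0 there exists A ∈ 𝓕 with 0 < P(A) < ε). Then the pointwise-constrained set U_K = {ξ ∈ L²(Ω, 𝓕, P; ℝⁿ) : ξ ∈ K a.s.} has empty interior in the Banach space L²(Ω, 𝓕, P; ℝⁿ): near every ξ ∈ U_K there are ξ′ ∈ L² arbitrarily close in L²-norm taking values outside K with positive probability. (Paper's Proposition 4.7: U_K admits no (relative) interior point.) -/

import Mathlib

open MeasureTheory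
open scoped ENNReal

/-!
Fix `y ∉ K`. Since `p < ∞`, the `L^p` norm is absolutely continuous: overwriting `f` by the constant
`y` on a set of small measure moves `f` little in `L^p`. When there are sets of arbitrarily small
positive measure, the functions taking the value `y` on a non-null set are therefore dense, and none
of them is almost everywhere in `K`.
-/

section

variable {α E : Type*} [MeasurableSpace α] {μ : Measure α} [NormedAddCommGroup E] {p : ℝ≥0∞}

theorem exists_pos_forall_eLpNorm_indicator_const_sub_le (hp_one : 1 ≤ p) (hp_top : p ≠ ∞)
    {f : α → E} (hf : MemLp f p μ) (y : E) {ε : ℝ} (hε : 0 < ε) :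
    ∃ δ : ℝ, 0 < δ ∧ ∀ A, MeasurableSet A → μ A ≤ ENNReal.ofReal δ →
      eLpNorm (A.indicator ((fun _ ↦ y) - f)) p μ ≤ ENNReal.ofReal ε := by
  obtain ⟨δ₁, hδ₁, h_const⟩ := eLpNorm_indicator_le_of_bound (μ := μ) (f := fun _ : α ↦ y) hp_top
    (half_pos hε) fun _ ↦ lt_add_one ‖y‖
  obtain ⟨δ₂, hδ₂, h_f⟩ := hf.eLpNorm_indicator_le hp_one hp_top (half_pos hε)
  refine ⟨min δ₁ δ₂, lt_min hδ₁ hδ₂, fun A hA hμA ↦ ?_⟩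
  have hμA₁ : μ A ≤ ENNReal.ofReal δ₁ := hμA.trans (ENNReal.ofReal_le_ofReal (min_le_left _ _))
  have hμA₂ : μ A ≤ ENNReal.ofReal δ₂ := hμA.trans (ENNReal.ofReal_le_ofReal (min_le_right _ _))
  calc eLpNorm (A.indicator ((fun _ ↦ y) - f)) p μ
      = eLpNorm (A.indicator (fun _ ↦ y) - A.indicator f) p μ := by rw [Set.indicator_sub']
    _ ≤ eLpNorm (A.indicator fun _ ↦ y) p μ + eLpNorm (A.indicator f) p μ :=
        eLpNorm_sub_le (aestronglyMeasurable_const.indicator hA)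
          (hf.aestronglyMeasurable.indicator hA) hp_one
    _ ≤ ENNReal.ofReal (ε / 2) + ENNReal.ofReal (ε / 2) :=
        add_le_add (h_const A hA hμA₁) (h_f A hA hμA₂)
    _ = ENNReal.ofReal ε := by
        rw [← ENNReal.ofReal_add (half_pos hε).le (half_pos hε).le, add_halves]

variable [Fact (1 ≤ p)]

theorem exists_pos_forall_exists_dist_le_ae_eq_const_on (hp_top : p ≠ ∞) (f : Lp E p μ) (y : E)
    {ε : ℝ} (hε : 0 < ε) :
    ∃ δ : ℝ, 0 < δ ∧ ∀ A, MeasurableSet A → μ A ≤ ENNReal.ofReal δ →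
      ∃ g : Lp E p μ, dist g f ≤ ε ∧ ∀ᵐ ω ∂μ, ω ∈ A → g ω = y := by
  obtain ⟨δ, hδ, h_small⟩ :=
    exists_pos_forall_eLpNorm_indicator_const_sub_le Fact.out hp_top (Lp.memLp f) y hε
  refine ⟨δ, hδ, fun A hA hμA ↦ ?_⟩
  have h_memLp : MemLp (A.indicator ((fun _ ↦ y) - ⇑f)) p μ :=
    ⟨(aestronglyMeasurable_const.sub (Lp.aestronglyMeasurable f)).indicator hA,
      (h_small A hA hμA).trans_lt ENNReal.ofReal_lt_top⟩
  refine ⟨f + h_memLp.toLp _, ?_, ?_⟩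
  · rw [dist_self_add_left, Lp.norm_toLp]
    exact ENNReal.toReal_le_of_le_ofReal hε.le (h_small A hA hμA)
  · filter_upwards [Lp.coeFn_add f (h_memLp.toLp _), h_memLp.coeFn_toLp] with ω h_add h_toLp hω
    rw [h_add, Pi.add_apply, h_toLp, Set.indicator_of_mem hω, Pi.sub_apply, add_sub_cancel]

theorem dense_setOf_frequently_ae_eq_const (hp_top : p ≠ ∞)
    (hsmall : ∀ ε : ℝ, 0 < ε → ∃ A : Set α,
      MeasurableSet A ∧ 0 < μ A ∧ μ A < ENNReal.ofReal ε) (y : E) :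
    Dense {f : Lp E p μ | ∃ᵐ ω ∂μ, f ω = y} := by
  refine Metric.dense_iff.2 fun f r hr ↦ ?_
  obtain ⟨δ, hδ, h_modify⟩ :=
    exists_pos_forall_exists_dist_le_ae_eq_const_on hp_top f y (half_pos hr)
  obtain ⟨A, hA, hA_pos, hA_lt⟩ := hsmall δ hδ
  obtain ⟨g, hgf, hg⟩ := h_modify A hA hA_lt.le
  have h_freq : ∃ᵐ ω ∂μ, ω ∈ A := frequently_ae_mem_iff.2 hA_pos.ne'
  exact ⟨g, hgf.trans_lt (half_lt_self hr), h_freq.mp hg⟩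

theorem pointwise_constraint_set_interior_empty_general (hp_top : p ≠ ∞)
    (hsmall : ∀ ε : ℝ, 0 < ε → ∃ A : Set α,
      MeasurableSet A ∧ 0 < μ A ∧ μ A < ENNReal.ofReal ε)
    {K : Set E} (hKproper : ∃ y, y ∉ K) :
    interior {f : Lp E p μ | ∀ᵐ ω ∂μ, f ω ∈ K} = ∅ := by
  obtain ⟨y, hy⟩ := hKproper
  refine interior_eq_empty_iff_dense_compl.2 ?_
  refine (dense_setOf_frequently_ae_eq_const hp_top hsmall y).mono fun f hf hfK ↦ ?_
  obtain ⟨ω, hωy, hωK⟩ := (hf.and_eventually hfK).exists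
  exact hy (hωy ▸ hωK)

end

/-- Paper's Proposition 4.7: if `K` is a nonempty closed convex proper subset of `ℝⁿ` and
the probability space admits measurable sets of arbitrarily small positive measure, then
the pointwise-constrained set `U_K ⊆ L²` has empty interior. -/
theorem pointwise_constraint_set_interior_empty
    {Ω : Type*} [MeasurableSpace Ω] (μ : Measure Ω) [IsProbabilityMeasure μ]
    (hsmall : ∀ ε : ℝ, 0 < ε → ∃ A : Set Ω,
      MeasurableSet A ∧ 0 < μ A ∧ μ A < ENNReal.ofReal ε)
    (n : ℕ) (hn : 1 ≤ n)
    (K : Set (EuclideanSpace ℝ (Fin n))) (hKne : K.Nonempty)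
    (hKcl : IsClosed K) (hKconv : Convex ℝ K)
    (hKproper : ∃ y : EuclideanSpace ℝ (Fin n), y ∉ K) :
    interior {f : Lp (EuclideanSpace ℝ (Fin n)) 2 μ | ∀ᵐ ω ∂μ, f ω ∈ K} = ∅ :=
  pointwise_constraint_set_interior_empty_general ENNReal.ofNat_ne_top hsmall hKproper
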